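/- Let c₀ > 0 be a rainbow-cycle constant and let r ≥ 4 be even. Then for all sufficiently large n (larger than a constant depending only on r), all δ ∈ (0,1), and every family H_1,…,H_k of r-uniform matchings over [n] with |H_i| ≥ δ·n for all i ∈ [k] and k ≥ 2^{r²+1}·c₀·δ^{-1}·n^{1-2/r}·(log₂ n)², there exists a rainbow even cover of H_1,…,H_k, i.e., a nonempty collection of hyperedges, at most one taken from each H_i, whose symmetric difference is empty. -/

import Mathlib

/-- `c₀ > 0` is a rainbow-cycle constant: for every `N ≥ 3`, every finite index
set (modeled as `Fin τ`), every `N`-element vertex set `V`, and every assignment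
of a matching `M t` of `2`-element subsets of `V` to each index `t`, if
`Σ_t |M t| ≥ c₀·N·log₂ N·log₂ log₂ N` then some nonempty subfamily, with one
edge chosen per index, has empty symmetric difference (equivalently, every
vertex lies in an even number of the chosen edges): a rainbow cycle. -/
def IsRainbowCycleConst (c₀ : ℝ) : Prop :=
  ∀ (N : ℕ), 3 ≤ N →
    ∀ (τ : ℕ) (V : Type) [Fintype V] [DecidableEq V], Fintype.card V = N →
      ∀ M : Fin τ → Finset (Finset V),
        (∀ t, ∀ e ∈ M t, e.card = 2) →
        (∀ t, ∀ e ∈ M t, ∀ e' ∈ M t, e ≠ e' → Disjoint e e') →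
        c₀ * N * Real.logb 2 N * Real.logb 2 (Real.logb 2 N) ≤
          ((∑ t : Fin τ, (M t).card : ℕ) : ℝ) →
        ∃ S : Finset (Fin τ), S.Nonempty ∧ ∃ e : Fin τ → Finset V,
          (∀ t ∈ S, e t ∈ M t) ∧
          ∀ x : V, Even ((S.filter fun t => x ∈ e t).card)

/-- A rainbow even cover of hypergraphs `H 1, …, H k` over `[n]`: a nonempty
set `S` of indices together with a choice of one hyperedge `E i ∈ H i` for each
`i ∈ S` whose symmetric difference is empty, i.e. every point of `[n]` lies in
an even number of the chosen hyperedges. -/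
def HasRainbowEvenCover {n k : ℕ} (H : Fin k → Finset (Finset (Fin n))) : Prop :=
  ∃ S : Finset (Fin k), S.Nonempty ∧ ∃ E : Fin k → Finset (Fin n),
    (∀ i ∈ S, E i ∈ H i) ∧ ∀ x : Fin n, Even ((S.filter fun i => x ∈ E i).card)

/-!
Fix `l`. The Kikuchi graph of an `r`-uniform matching `H` has the `l`-subsets of `[n]` as vertices
and joins `A` to `A ∆ C` whenever `C ∈ H` meets `A` in exactly `r / 2` points, so that `A ∆ C` is
again an `l`-set. A cycle in such graphs with one edge from each of several hypergraphs is a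
rainbow even cover, since each vertex of the cycle cancels out of the symmetric difference of the
hyperedges used.

For `l` of order `n ^ (1 - 2 / r)` few pairs of Kikuchi edges of `H` meet, because an `l`-set is
rarely balanced with respect to two disjoint hyperedges at once. Deleting the edges that meet
another one leaves a matching with at least `|H| * (n - r).choose (l - r / 2)` edges, and a
rainbow cycle in these matchings exists by the defining property of `c₀`.
-/

open Finset
open scoped symmDiff

section Choose

lemma choose_add_add_mul_ascFactorial (m a j : ℕ) :
    (m + j).choose (a + j) * (a + 1).ascFactorial j = m.choose a * (m + 1).ascFactorial j := by
  induction j with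
  | zero => simp
  | succ j ih =>
    have absorb : (m + j + 1).choose (a + j + 1) * (a + j + 1) =
        (m + j + 1) * (m + j).choose (a + j) := (Nat.add_one_mul_choose_eq _ _).symm
    calc (m + j + 1).choose (a + j + 1) * (a + 1).ascFactorial (j + 1)
        = (m + j + 1).choose (a + j + 1) * (a + j + 1) * (a + 1).ascFactorial j := by
          rw [Nat.ascFactorial_succ]; ring
      _ = (m + j + 1) * ((m + j).choose (a + j) * (a + 1).ascFactorial j) := by
          rw [absorb, mul_assoc]
      _ = m.choose a * (m + 1).ascFactorial (j + 1) := by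
          rw [ih, Nat.ascFactorial_succ]; ring

lemma choose_add_add_mul_pow_le (m a j : ℕ) :
    (m + j).choose (a + j) * a ^ j ≤ m.choose a * (m + j) ^ j :=
  calc (m + j).choose (a + j) * a ^ j
      ≤ (m + j).choose (a + j) * (a + 1).ascFactorial j := by
        gcongr
        exact (Nat.pow_le_pow_left a.le_succ j).trans (Nat.pow_succ_le_ascFactorial _ j)
    _ = m.choose a * (m + 1).ascFactorial j := choose_add_add_mul_ascFactorial m a j
    _ ≤ m.choose a * (m + j) ^ j := by gcongr; exact Nat.ascFactorial_le_pow_add m j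

lemma choose_mul_pow_le (m a j : ℕ) :
    m.choose a * m ^ j ≤ (m + j).choose (a + j) * (a + j) ^ j :=
  calc m.choose a * m ^ j
      ≤ m.choose a * (m + 1).ascFactorial j := by
        gcongr
        exact (Nat.pow_le_pow_left m.le_succ j).trans (Nat.pow_succ_le_ascFactorial _ j)
    _ = (m + j).choose (a + j) * (a + 1).ascFactorial j :=
        (choose_add_add_mul_ascFactorial m a j).symm
    _ ≤ (m + j).choose (a + j) * (a + j) ^ j := by
        gcongr; exact Nat.ascFactorial_le_pow_add a j

lemma choose_mul_pow_mul_pow_le {n l s : ℕ} (hsl : s ≤ l) (hln : l + s ≤ n) :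
    n.choose l * (l - s) ^ s * (n - l - s) ^ s ≤
      (n - 2 * s).choose (l - s) * (n ^ s * n ^ s) := by
  have lower_both : n.choose l * (l - s) ^ s ≤ (n - s).choose (l - s) * n ^ s := by
    have h := choose_add_add_mul_pow_le (n - s) (l - s) s
    rwa [Nat.sub_add_cancel (by omega : s ≤ n), Nat.sub_add_cancel hsl] at h
  have lower_top : (n - s).choose (l - s) * (n - l - s) ^ s ≤
      (n - 2 * s).choose (l - s) * (n - s) ^ s := by
    have h := choose_add_add_mul_pow_le (n - 2 * s) (n - l - s) s
    rwa [show n - 2 * s + s = n - s by omega,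
      Nat.choose_symm_of_eq_add (show n - s = n - l - s + s + (l - s) by omega),
      Nat.choose_symm_of_eq_add (show n - 2 * s = n - l - s + (l - s) by omega)] at h
  calc n.choose l * (l - s) ^ s * (n - l - s) ^ s
      ≤ (n - s).choose (l - s) * n ^ s * (n - l - s) ^ s := by gcongr
    _ = (n - s).choose (l - s) * (n - l - s) ^ s * n ^ s := by ring
    _ ≤ (n - 2 * s).choose (l - s) * (n - s) ^ s * n ^ s := by gcongr
    _ ≤ (n - 2 * s).choose (l - s) * n ^ s * n ^ s := by gcongr; exact n.sub_le s
    _ = (n - 2 * s).choose (l - s) * (n ^ s * n ^ s) := by ring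

lemma choose_sub_mul_pow_le {n l s : ℕ} (hsl : 2 * s ≤ l) (hn : 4 * s ≤ n) :
    (n - 4 * s).choose (l - 2 * s) * (n - 3 * s) ^ s ≤
      (n - 2 * s).choose (l - s) * (l - s) ^ s := by
  have h := choose_mul_pow_le (n - 3 * s) (l - 2 * s) s
  rw [show n - 3 * s + s = n - 2 * s by omega, show l - 2 * s + s = l - s by omega] at h
  exact (Nat.mul_le_mul_right _ (Nat.choose_le_choose _ (by omega))).trans h

lemma succ_le_choose {n l : ℕ} (hln : l < n) : l + 1 ≤ n.choose l :=
  (Nat.choose_succ_self_right l).symm.trans_le (Nat.choose_le_choose l hln)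

lemma logb_choose_mul_logb_logb_choose_le (n l : ℕ) :
    Real.logb 2 (n.choose l) * Real.logb 2 (Real.logb 2 (n.choose l)) ≤
      l * Real.logb 2 n ^ 2 := by
  rcases (n.choose l).eq_zero_or_pos with hzero | hpos
  · simp only [hzero, Nat.cast_zero, Real.logb_zero, zero_mul]
    positivity
  have logb_nonneg : 0 ≤ Real.logb 2 (n.choose l) :=
    Real.logb_nonneg one_lt_two (by exact_mod_cast hpos)
  have logb_le_mul : Real.logb 2 (n.choose l) ≤ l * Real.logb 2 n := by
    rw [← Real.logb_pow]
    exact Real.logb_le_logb_of_le one_lt_two (by positivity)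
      (by exact_mod_cast Nat.choose_le_pow n l)
  have logb_le : Real.logb 2 (n.choose l) ≤ n := by
    rw [Real.logb_le_iff_le_rpow one_lt_two (by positivity), Real.rpow_natCast]
    exact_mod_cast Nat.choose_le_two_pow n l
  have logb_n_nonneg : 0 ≤ Real.logb 2 n :=
    div_nonneg (Real.log_natCast_nonneg n) (Real.log_nonneg one_le_two)
  rcases logb_nonneg.eq_or_lt with hlog | hlog
  · rw [← hlog, zero_mul]
    positivity
  calc Real.logb 2 (n.choose l) * Real.logb 2 (Real.logb 2 (n.choose l))
      ≤ Real.logb 2 (n.choose l) * Real.logb 2 n :=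
        mul_le_mul_of_nonneg_left (Real.logb_le_logb_of_le one_lt_two hlog logb_le) logb_nonneg
    _ ≤ l * Real.logb 2 n * Real.logb 2 n := by gcongr
    _ = l * Real.logb 2 n ^ 2 := by ring

lemma mul_choose_mul_logb_le {n l : ℕ} {c B : ℝ} (hc : 0 ≤ c) (hB : l * n.choose l ≤ B) :
    c * n.choose l * Real.logb 2 (n.choose l) * Real.logb 2 (Real.logb 2 (n.choose l)) ≤
      c * Real.logb 2 n ^ 2 * B :=
  calc c * n.choose l * Real.logb 2 (n.choose l) * Real.logb 2 (Real.logb 2 (n.choose l))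
      = c * n.choose l *
          (Real.logb 2 (n.choose l) * Real.logb 2 (Real.logb 2 (n.choose l))) := by ring
    _ ≤ c * n.choose l * (l * Real.logb 2 n ^ 2) :=
        mul_le_mul_of_nonneg_left (logb_choose_mul_logb_logb_choose_le n l) (by positivity)
    _ = c * Real.logb 2 n ^ 2 * (l * n.choose l) := by ring
    _ ≤ c * Real.logb 2 n ^ 2 * B := by gcongr

end Choose

section Level

variable {n l s : ℕ} {y : ℝ}

lemma mul_four_pow_mul_choose_le (hy : n * y ^ s = (n : ℝ) ^ s) (hly : 8 * l ≤ y)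
    (hl : 0 < l) (hsl : 2 * s ≤ l) (hsn : 6 * s ≤ n) :
    n * 4 ^ s * (n - 4 * s).choose (l - 2 * s) ≤ (n - 2 * s).choose (l - s) := by
  have hlR : (0 : ℝ) < l := by exact_mod_cast hl
  have hy0 : 0 < y := by linarith
  have half_le : (n : ℝ) / 2 ≤ (n - 3 * s : ℕ) := by
    have : n ≤ 2 * (n - 3 * s) := by omega
    rify at this
    linarith
  have sub_le : ((l - s : ℕ) : ℝ) ≤ y / 8 := by
    have : ((l - s : ℕ) : ℝ) ≤ l := by exact_mod_cast l.sub_le s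
    linarith
  have scaled : ((n - 4 * s).choose (l - 2 * s) : ℝ) * (n / 2) ^ s ≤
      (n - 2 * s).choose (l - s) * (y / 8) ^ s :=
    calc ((n - 4 * s).choose (l - 2 * s) : ℝ) * (n / 2) ^ s
        ≤ (n - 4 * s).choose (l - 2 * s) * ((n - 3 * s : ℕ) : ℝ) ^ s := by gcongr
      _ ≤ (n - 2 * s).choose (l - s) * ((l - s : ℕ) : ℝ) ^ s := by
          exact_mod_cast choose_sub_mul_pow_le hsl (by omega)
      _ ≤ (n - 2 * s).choose (l - s) * (y / 8) ^ s := by gcongr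
  have cleared : (n * 4 ^ s * (n - 4 * s).choose (l - 2 * s) : ℝ) * y ^ s ≤
      (n - 2 * s).choose (l - s) * y ^ s :=
    calc (n * 4 ^ s * (n - 4 * s).choose (l - 2 * s) : ℝ) * y ^ s
        = 8 ^ s * ((n - 4 * s).choose (l - 2 * s) * (n / 2) ^ s) := by
          rw [div_pow, ← hy, show (8 : ℝ) = 4 * 2 by norm_num, mul_pow]
          field_simp
      _ ≤ 8 ^ s * ((n - 2 * s).choose (l - s) * (y / 8) ^ s) := by gcongr
      _ = (n - 2 * s).choose (l - s) * y ^ s := by rw [div_pow]; field_simp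
  exact_mod_cast le_of_mul_le_mul_right cleared (by positivity)

lemma choose_le_sixtyFour_pow_mul (hy : n * y ^ s = (n : ℝ) ^ s) (hy0 : 0 < y)
    (hyl : y ≤ 16 * l) (hsl : 2 * s ≤ l) (hn : 0 < n) (hln : 2 * (l + s) ≤ n) :
    (n.choose l : ℝ) ≤ 64 ^ s * n * (n - 2 * s).choose (l - s) := by
  have le_sub : y / 32 ≤ (l - s : ℕ) := by
    have : l ≤ 2 * (l - s) := by omega
    rify at this
    linarith
  have half_le : (n : ℝ) / 2 ≤ (n - l - s : ℕ) := by
    have : n ≤ 2 * (n - l - s) := by omega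
    rify at this
    linarith
  have scaled : (n.choose l : ℝ) * (y / 32) ^ s * (n / 2) ^ s ≤
      (n - 2 * s).choose (l - s) * (n ^ s * n ^ s) :=
    calc (n.choose l : ℝ) * (y / 32) ^ s * (n / 2) ^ s
        ≤ n.choose l * ((l - s : ℕ) : ℝ) ^ s * ((n - l - s : ℕ) : ℝ) ^ s := by gcongr
      _ ≤ (n - 2 * s).choose (l - s) * (n ^ s * n ^ s) := by
          exact_mod_cast choose_mul_pow_mul_pow_le (by omega) (by omega)
  have cleared : (n.choose l : ℝ) * (y ^ s * n ^ s) ≤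
      64 ^ s * n * (n - 2 * s).choose (l - s) * (y ^ s * n ^ s) :=
    calc (n.choose l : ℝ) * (y ^ s * n ^ s)
        = 64 ^ s * (n.choose l * (y / 32) ^ s * (n / 2) ^ s) := by
          rw [div_pow, div_pow, show (64 : ℝ) = 32 * 2 by norm_num, mul_pow]
          field_simp
      _ ≤ 64 ^ s * ((n - 2 * s).choose (l - s) * (n ^ s * n ^ s)) := by gcongr
      _ = 64 ^ s * n * (n - 2 * s).choose (l - s) * (y ^ s * n ^ s) := by
          nth_rewrite 1 [← hy]; ring
  exact le_of_mul_le_mul_right cleared (by positivity)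

lemma mul_rpow_one_sub_inv_pow (hn : 0 < n) (hs : s ≠ 0) :
    n * ((n : ℝ) ^ (1 - (s : ℝ)⁻¹)) ^ s = (n : ℝ) ^ s := by
  have hn0 : (0 : ℝ) < n := by exact_mod_cast hn
  rw [← Real.rpow_natCast, ← Real.rpow_mul hn0.le, ← Real.rpow_one_add' hn0.le]
  all_goals field_simp
  all_goals simp [hs]

lemma rpow_two_sub {x : ℝ} (hx : 0 < x) (c : ℝ) : x ^ (2 - c) = x * x ^ (1 - c) := by
  rw [show 2 - c = 1 + (1 - c) by ring, Real.rpow_add hx, Real.rpow_one]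

lemma le_rpow_one_sub_inv {b : ℕ} (hs : 2 ≤ s) (hb : b ^ 2 ≤ n) (hn : 0 < n) :
    (b : ℝ) ≤ (n : ℝ) ^ (1 - (s : ℝ)⁻¹) := by
  have hinv : (s : ℝ)⁻¹ ≤ 2⁻¹ := by gcongr; exact_mod_cast hs
  calc (b : ℝ) ≤ √n := Real.le_sqrt_of_sq_le (by exact_mod_cast hb)
    _ = (n : ℝ) ^ (1 / 2 : ℝ) := Real.sqrt_eq_rpow n
    _ ≤ (n : ℝ) ^ (1 - (s : ℝ)⁻¹) :=
        Real.rpow_le_rpow_of_exponent_le (by exact_mod_cast hn) (by linarith)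

lemma exists_kikuchi_level (hs : 2 ≤ s) (hn : (64 * s) ^ 2 ≤ n) :
    ∃ l : ℕ, 4 * s ≤ l ∧ l < n ∧
      n * 4 ^ s * (n - 4 * s).choose (l - 2 * s) ≤ (n - 2 * s).choose (l - s) ∧
      (l * n.choose l : ℝ) ≤
        64 ^ s * (n : ℝ) ^ (2 - 2 / ((2 * s : ℕ) : ℝ)) * (n - 2 * s).choose (l - s) := by
  have hn' : 64 * s ≤ n := (Nat.le_self_pow two_ne_zero _).trans hn
  have hn0 : 0 < n := by omega
  have hy := mul_rpow_one_sub_inv_pow hn0 (show s ≠ 0 by omega)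
  have le_y : 64 * (s : ℝ) ≤ (n : ℝ) ^ (1 - (s : ℝ)⁻¹) := by
    exact_mod_cast le_rpow_one_sub_inv hs hn hn0
  have y_le : (n : ℝ) ^ (1 - (s : ℝ)⁻¹) ≤ n :=
    Real.rpow_le_self_of_one_le (by exact_mod_cast hn0) (by simp)
  have exponent : 2 / ((2 * s : ℕ) : ℝ) = (s : ℝ)⁻¹ := by push_cast; field_simp
  rw [exponent, rpow_two_sub (by exact_mod_cast hn0)]
  set y : ℝ := (n : ℝ) ^ (1 - (s : ℝ)⁻¹)
  have hsR : (2 : ℝ) ≤ s := by exact_mod_cast hs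
  have l_le : (⌊y / 8⌋₊ : ℝ) ≤ y / 8 := Nat.floor_le (by linarith)
  have lt_l : y / 8 < ⌊y / 8⌋₊ + 1 := Nat.lt_floor_add_one _
  have four_s_le : 4 * s ≤ ⌊y / 8⌋₊ := Nat.le_floor (by push_cast; linarith)
  set l := ⌊y / 8⌋₊
  have hln : 8 * l ≤ n := by rify; linarith
  refine ⟨l, four_s_le, by omega,
    mul_four_pow_mul_choose_le hy (by linarith) (by omega) (by omega) (by omega), ?_⟩
  calc (l * n.choose l : ℝ)
      ≤ y * (64 ^ s * n * (n - 2 * s).choose (l - s)) := by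
        gcongr
        · linarith
        · exact choose_le_sixtyFour_pow_mul hy (by linarith) (by linarith) (by omega) hn0
            (by omega)
    _ = 64 ^ s * (n * y) * (n - 2 * s).choose (l - s) := by ring

end Level

section SetFamilies

variable {α : Type*} [DecidableEq α]

lemma exists_subset_pairwiseDisjoint_card_le (E : Finset (Finset α)) :
    ∃ M ⊆ E, (M : Set (Finset α)).PairwiseDisjoint id ∧
      #E ≤ #M + #{p ∈ E.offDiag | ¬Disjoint p.1 p.2} := by
  refine ⟨{e ∈ E | ∀ e' ∈ E, e ≠ e' → Disjoint e e'}, filter_subset _ _,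
    fun e he e' he' => (mem_filter.1 he).2 e' (mem_filter.1 he').1, ?_⟩
  rw [← card_filter_add_card_filter_not (s := E) (fun e => ∀ e' ∈ E, e ≠ e' → Disjoint e e')]
  gcongr
  refine card_le_card_of_surjOn Prod.fst fun e he => ?_
  obtain ⟨heE, e', he', hne, hmeet⟩ : e ∈ E ∧ ∃ e' ∈ E, e ≠ e' ∧ ¬Disjoint e e' := by
    simpa using he
  exact ⟨(e, e'), by simp [heE, he', hne, hmeet], rfl⟩

lemma card_filter_powersetCard_inter {U C : Finset α} {l s : ℕ} (hC : C ⊆ U) (hs : s ≤ l)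
    (p : Finset α → Prop) [DecidablePred p] :
    #{A ∈ powersetCard l U | #(A ∩ C) = s ∧ p (A \ C)} =
      (#C).choose s * #{B ∈ powersetCard (l - s) (U \ C) | p B} := by
  have recover : ∀ K ⊆ C, ∀ B ⊆ U \ C, (K ∪ B) ∩ C = K ∧ (K ∪ B) \ C = B := fun K hK B hB => by
    have hBC : Disjoint B C := disjoint_of_subset_left hB sdiff_disjoint
    rw [union_inter_distrib_right, inter_eq_left.2 hK, disjoint_iff_inter_eq_empty.1 hBC,
      union_empty, union_sdiff_distrib, sdiff_eq_empty_iff_subset.2 hK, empty_union,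
      sdiff_eq_self_of_disjoint hBC]
    exact ⟨rfl, rfl⟩
  rw [← card_powersetCard, ← card_product]
  refine card_nbij' (fun A => (A ∩ C, A \ C)) (fun q => q.1 ∪ q.2) ?_ ?_
    (fun A _ => (union_comm _ _).trans (sdiff_union_inter A C)) ?_
  · intro A hA
    obtain ⟨⟨hAU, rfl⟩, hAs, hp⟩ := by simpa only [mem_coe, mem_filter, mem_powersetCard] using hA
    have := card_sdiff_add_card_inter A C
    simp only [mem_coe, mem_product, mem_filter, mem_powersetCard]
    exact ⟨⟨inter_subset_right, hAs⟩, ⟨sdiff_subset_sdiff hAU le_rfl, by omega⟩, hp⟩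
  · rintro ⟨K, B⟩ hq
    obtain ⟨⟨hK, hKs⟩, ⟨hB, hBl⟩, hp⟩ := by
      simpa only [mem_coe, mem_product, mem_filter, mem_powersetCard] using hq
    obtain ⟨inter_eq, sdiff_eq⟩ := recover K hK B hB
    have := card_sdiff_add_card_inter (K ∪ B) C
    rw [inter_eq, sdiff_eq] at this
    have card_union : #(K ∪ B) = l := by omega
    rw [mem_coe, mem_filter, mem_powersetCard, inter_eq, sdiff_eq]
    exact ⟨⟨union_subset (hK.trans hC) (hB.trans sdiff_subset), card_union⟩, hKs, hp⟩
  · rintro ⟨K, B⟩ hq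
    obtain ⟨⟨hK, -⟩, ⟨hB, -⟩, -⟩ := by
      simpa only [mem_coe, mem_product, mem_filter, mem_powersetCard] using hq
    exact Prod.ext (recover K hK B hB).1 (recover K hK B hB).2

lemma pair_right_injective (a : α) : Function.Injective fun b => ({a, b} : Finset α) := by
  intro b c h
  rw [← coe_inj] at h
  simp only [coe_pair, Set.pair_eq_pair_iff] at h
  grind

lemma even_card_filter_mem_of_even_cover {ι : Type*} {S : Finset ι} {E : ι → Finset α}
    {e : ι → Finset (Finset α)}
    (he : ∀ t ∈ S, (E t).Nonempty ∧ ∃ A, e t = {A, A ∆ E t})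
    (heven : ∀ A, Even #{t ∈ S | A ∈ e t}) (x : α) :
    Even #{t ∈ S | x ∈ E t} := by
  have odd_iff : ∀ t ∈ S, (Odd #{A ∈ e t | x ∈ A} ↔ x ∈ E t) := by
    intro t ht
    obtain ⟨hne, A, hA⟩ := he t ht
    have hne' : A ≠ A ∆ E t := fun h => hne.ne_empty (symmDiff_eq_left.1 h.symm)
    rw [hA, filter_insert, filter_singleton]
    by_cases hxA : x ∈ A <;> by_cases hxE : x ∈ E t <;>
      simp [mem_symmDiff, hxA, hxE, hne', Nat.odd_iff]
  have double_count : ∑ t ∈ S, #{A ∈ e t | x ∈ A} =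
      ∑ A ∈ S.biUnion e with x ∈ A, #{t ∈ S | A ∈ e t} := by
    refine .trans (sum_congr rfl fun t ht => congrArg card ?_)
      (sum_card_bipartiteAbove_eq_sum_card_bipartiteBelow fun t A => A ∈ e t)
    ext A
    simp only [mem_bipartiteAbove, mem_filter, mem_biUnion]
    tauto
  rw [← filter_congr odd_iff, ← even_sum_iff_even_card_odd, double_count]
  exact even_sum _ fun A _ => heven A

end SetFamilies

section Kikuchi

variable {α : Type*} [DecidableEq α] [Fintype α] {l s : ℕ} {A C C' : Finset α}
  {H : Finset (Finset α)} {e : Finset (Finset α)}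

/-- The `l`-sets containing exactly half of the points of `C`, i.e. those whose symmetric
difference with `C` is again an `l`-set. They are the endpoints of the Kikuchi edges of the
hyperedge `C`. -/
def balancedSets (l : ℕ) (C : Finset α) : Finset (Finset α) :=
  {A ∈ powersetCard l univ | 2 * #(A ∩ C) = #C}

/-- The edge set of the level-`l` Kikuchi graph of `H`: the pairs `{A, A ∆ C}` with `C ∈ H` and
`A` balanced with respect to `C`. Vertices are kept as plain finsets, and edges as sets of
vertices. -/
def kikuchiEdges (l : ℕ) (H : Finset (Finset α)) : Finset (Finset (Finset α)) :=
  (H.sigma (balancedSets l)).image fun p => {p.2, p.2 ∆ p.1}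

lemma mem_balancedSets : A ∈ balancedSets l C ↔ #A = l ∧ 2 * #(A ∩ C) = #C := by
  simp [balancedSets]

lemma symmDiff_mem_balancedSets (hA : A ∈ balancedSets l C) : A ∆ C ∈ balancedSets l C := by
  rw [mem_balancedSets] at hA ⊢
  have inter_eq : A ∆ C ∩ C = C \ A := by
    ext x
    simp only [mem_inter, mem_symmDiff, mem_sdiff]
    tauto
  have cardA := card_sdiff_add_card_inter A C
  have cardC := card_sdiff_add_card_inter C A
  have cardAC := card_sdiff_add_card_inter (A ∆ C) C
  rw [inter_comm] at cardC
  rw [inter_eq, symmDiff_sdiff_right] at cardAC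
  rw [inter_eq]
  omega

lemma card_balancedSets (hC : #C = 2 * s) (hsl : s ≤ l) :
    #(balancedSets l C) =
      s.centralBinom * (Fintype.card α - 2 * s).choose (l - s) := by
  have h := card_filter_powersetCard_inter (subset_univ C) hsl fun _ => True
  rw [filter_true, card_powersetCard, card_univ_sdiff, hC] at h
  rw [Nat.centralBinom_eq_two_mul_choose, ← h]
  congr 1 with A
  simp [balancedSets, hC]

lemma card_balancedSets_inter (hC : #C = 2 * s) (hC' : #C' = 2 * s) (hdisj : Disjoint C C')
    (hsl : 2 * s ≤ l) :
    #(balancedSets l C ∩ balancedSets l C') =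
      s.centralBinom ^ 2 * (Fintype.card α - 4 * s).choose (l - 2 * s) := by
  have hC'sub : C' ⊆ univ \ C := subset_sdiff.2 ⟨subset_univ _, hdisj.symm⟩
  have h := card_filter_powersetCard_inter (subset_univ C) (by omega : s ≤ l)
    fun B => #(B ∩ C') = s
  have h' := card_filter_powersetCard_inter hC'sub (by omega : s ≤ l - s) fun _ => True
  simp only [and_true, filter_true, card_powersetCard, card_sdiff_of_subset hC'sub,
    card_univ_sdiff, hC, hC', Nat.sub_sub] at h h'
  rw [h', ← Nat.centralBinom_eq_two_mul_choose, ← mul_assoc, ← sq,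
    show 2 * s + 2 * s = 4 * s by ring, show s + s = 2 * s by ring] at h
  rw [← h]
  congr 1 with A
  have sdiff_inter : A \ C ∩ C' = A ∩ C' := by
    rw [sdiff_inter_right_comm, sdiff_eq_self_of_disjoint]
    exact disjoint_of_subset_left inter_subset_right hdisj.symm
  simp only [balancedSets, mem_inter, mem_filter, hC, hC', sdiff_inter]
  grind

lemma mem_kikuchiEdges :
    e ∈ kikuchiEdges l H ↔ ∃ C ∈ H, ∃ A ∈ balancedSets l C, e = {A, A ∆ C} := by
  simp only [kikuchiEdges, mem_image, mem_sigma, Sigma.exists, and_assoc, exists_and_left,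
    eq_comm]

lemma subset_powersetCard_of_mem_kikuchiEdges (he : e ∈ kikuchiEdges l H) :
    e ⊆ powersetCard l univ := by
  obtain ⟨C, -, A, hA, rfl⟩ := mem_kikuchiEdges.1 he
  simp [insert_subset_iff, (mem_balancedSets.1 hA).1,
    (mem_balancedSets.1 (symmDiff_mem_balancedSets hA)).1]

lemma card_eq_two_of_mem_kikuchiEdges (hH : ∅ ∉ H) (he : e ∈ kikuchiEdges l H) : #e = 2 := by
  obtain ⟨C, hC, A, -, rfl⟩ := mem_kikuchiEdges.1 he
  refine card_pair fun h => hH ?_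
  rwa [← bot_eq_empty, ← symmDiff_eq_left.1 h.symm]

lemma exists_eq_pair_symmDiff_of_mem (he : e ∈ kikuchiEdges l H) (hA : A ∈ e) :
    ∃ C ∈ H, A ∈ balancedSets l C ∧ e = {A, A ∆ C} := by
  obtain ⟨C, hC, B, hB, rfl⟩ := mem_kikuchiEdges.1 he
  rcases mem_insert.1 hA with rfl | hA
  · exact ⟨C, hC, hB, rfl⟩
  · obtain rfl := mem_singleton.1 hA
    exact ⟨C, hC, symmDiff_mem_balancedSets hB, by
      rw [symmDiff_symmDiff_cancel_right, pair_comm]⟩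

lemma sum_card_balancedSets_le (l : ℕ) (H : Finset (Finset α)) :
    ∑ C ∈ H, #(balancedSets l C) ≤ 2 * #(kikuchiEdges l H) := by
  rw [← card_sigma]
  refine card_le_mul_card_image _ 2 fun e he => ?_
  obtain ⟨p, -, rfl⟩ := mem_image.1 he
  refine (card_le_card_of_injOn Sigma.snd (fun q hq => ?_) ?_).trans
    (card_le_two (a := p.2) (b := p.2 ∆ p.1))
  · exact (mem_filter.1 hq).2 ▸ mem_insert_self _ _
  · rintro ⟨C, A⟩ hq ⟨C', A'⟩ hq' rfl
    have same_edge : ({A, A ∆ C} : Finset (Finset α)) = {A, A ∆ C'} :=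
      (mem_filter.1 hq).2.trans (mem_filter.1 hq').2.symm
    rw [symmDiff_right_injective A (pair_right_injective A same_edge)]

lemma card_meeting_kikuchiEdges_le (l : ℕ) (H : Finset (Finset α)) :
    #{p ∈ (kikuchiEdges l H).offDiag | ¬Disjoint p.1 p.2} ≤
      ∑ p ∈ H.offDiag, #(balancedSets l p.1 ∩ balancedSets l p.2) := by
  rw [← card_sigma]
  refine card_le_card_of_surjOn
    (fun q => ({q.2, q.2 ∆ q.1.1}, {q.2, q.2 ∆ q.1.2})) ?_
  rintro ⟨e, e'⟩ hmem
  obtain ⟨⟨he, he', hne⟩, hmeet⟩ : (e ∈ kikuchiEdges l H ∧ e' ∈ kikuchiEdges l H ∧ e ≠ e') ∧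
      ¬Disjoint e e' := by simpa using hmem
  obtain ⟨A, hA, hA'⟩ := not_disjoint_iff.1 hmeet
  obtain ⟨C, hC, hAC, rfl⟩ := exists_eq_pair_symmDiff_of_mem he hA
  obtain ⟨C', hC', hAC', rfl⟩ := exists_eq_pair_symmDiff_of_mem he' hA'
  have hCC' : C ≠ C' := by rintro rfl; exact hne rfl
  exact ⟨⟨(C, C'), A⟩, by simp [hC, hC', hCC', hAC, hAC'], rfl⟩

lemma sum_card_balancedSets_inter_le (hsl : 2 * s ≤ l) (hcard : ∀ C ∈ H, #C = 2 * s)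
    (hdisj : (H : Set (Finset α)).PairwiseDisjoint id) :
    ∑ p ∈ H.offDiag, #(balancedSets l p.1 ∩ balancedSets l p.2) ≤
      #H ^ 2 * (s.centralBinom ^ 2 * (Fintype.card α - 4 * s).choose (l - 2 * s)) := by
  have card_inter : ∀ p ∈ H.offDiag, #(balancedSets l p.1 ∩ balancedSets l p.2) =
      s.centralBinom ^ 2 * (Fintype.card α - 4 * s).choose (l - 2 * s) := fun p hp => by
    obtain ⟨hC, hC', hne⟩ := mem_offDiag.1 hp
    exact card_balancedSets_inter (hcard _ hC) (hcard _ hC') (hdisj hC hC' hne) hsl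
  rw [sum_congr rfl card_inter, sum_const, smul_eq_mul, offDiag_card, sq #H]
  gcongr
  exact Nat.sub_le _ _

lemma exists_kikuchi_matching (hs : 2 ≤ s) (hsl : 2 * s ≤ l) (hcard : ∀ C ∈ H, #C = 2 * s)
    (hdisj : (H : Set (Finset α)).PairwiseDisjoint id)
    (hsparse : Fintype.card α * 4 ^ s * (Fintype.card α - 4 * s).choose (l - 2 * s) ≤
      (Fintype.card α - 2 * s).choose (l - s)) :
    ∃ M ⊆ kikuchiEdges l H, (M : Set (Finset (Finset α))).PairwiseDisjoint id ∧
      #H * (Fintype.card α - 2 * s).choose (l - s) ≤ #M := by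
  obtain ⟨M, hME, hMdisj, hM⟩ := exists_subset_pairwiseDisjoint_card_le (kikuchiEdges l H)
  refine ⟨M, hME, hMdisj, ?_⟩
  have edges := sum_card_balancedSets_le l H
  rw [sum_congr rfl fun C hC => card_balancedSets (hcard C hC) (by omega), sum_const,
    smul_eq_mul] at edges
  have meeting := (card_meeting_kikuchiEdges_le l H).trans
    (sum_card_balancedSets_inter_le hsl hcard hdisj)
  have binom_le : s.centralBinom ≤ 4 ^ s := Nat.centralBinom_le_four_pow s
  have four_le_binom : 4 ≤ s.centralBinom := by
    have := Nat.choose_le_centralBinom 1 s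
    rw [Nat.choose_one_right] at this
    omega
  have card_H_le : 4 * #H ≤ Fintype.card α :=
    calc 4 * #H ≤ #H * (2 * s) := by nlinarith
      _ = ∑ C ∈ H, #C := (sum_const_nat hcard).symm
      _ = #(H.biUnion id) := (card_biUnion hdisj).symm
      _ ≤ Fintype.card α := card_le_univ _
  set X := (Fintype.card α - 2 * s).choose (l - s)
  set Y := (Fintype.card α - 4 * s).choose (l - 2 * s)
  set b := s.centralBinom
  have few_meeting : 4 * (#H ^ 2 * (b ^ 2 * Y)) ≤ #H * (b * X) :=
    calc 4 * (#H ^ 2 * (b ^ 2 * Y)) = #H * (b * (4 * #H * b * Y)) := by ring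
      _ ≤ #H * (b * (Fintype.card α * 4 ^ s * Y)) := by gcongr
      _ ≤ #H * (b * X) := by gcongr
  have many_edges : 4 * (#H * X) ≤ #H * (b * X) :=
    calc 4 * (#H * X) ≤ b * (#H * X) := by gcongr
      _ = #H * (b * X) := by ring
  omega

lemma hasRainbowEvenCover_of_kikuchiEdges {n k : ℕ} {H : Fin k → Finset (Finset (Fin n))}
    (hH : ∀ i, ∅ ∉ H i) {S : Finset (Fin k)} (hS : S.Nonempty)
    {e : Fin k → Finset (Finset (Fin n))} (he : ∀ t ∈ S, e t ∈ kikuchiEdges l (H t))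
    (heven : ∀ A, Even #{t ∈ S | A ∈ e t}) : HasRainbowEvenCover H := by
  have hyperedge : ∀ t, ∃ C, t ∈ S → C ∈ H t ∧ ∃ A, e t = {A, A ∆ C} := fun t => by
    by_cases ht : t ∈ S
    · obtain ⟨C, hC, A, -, hA⟩ := mem_kikuchiEdges.1 (he t ht)
      exact ⟨C, fun _ => ⟨hC, A, hA⟩⟩
    · exact ⟨∅, fun h => absurd h ht⟩
  choose E hE using hyperedge
  refine ⟨S, hS, E, fun t ht => (hE t ht).1,
    even_card_filter_mem_of_even_cover (fun t ht => ⟨?_, (hE t ht).2⟩) heven⟩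
  exact nonempty_iff_ne_empty.2 fun h => hH t (h ▸ (hE t ht).1)

end Kikuchi

lemma IsRainbowCycleConst.exists_rainbow_cycle {c₀ : ℝ} (hc₀ : IsRainbowCycleConst c₀)
    {W : Type} [DecidableEq W] {U : Finset W} (hU : 3 ≤ #U) {k : ℕ}
    {M : Fin k → Finset (Finset W)} (hMU : ∀ t, ∀ e ∈ M t, e ⊆ U)
    (hM2 : ∀ t, ∀ e ∈ M t, #e = 2)
    (hMdisj : ∀ t, (M t : Set (Finset W)).PairwiseDisjoint id)
    (hM : c₀ * #U * Real.logb 2 #U * Real.logb 2 (Real.logb 2 #U) ≤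
      ((∑ t, #(M t) : ℕ) : ℝ)) :
    ∃ S : Finset (Fin k), S.Nonempty ∧ ∃ e : Fin k → Finset W,
      (∀ t ∈ S, e t ∈ M t) ∧ ∀ x, Even #{t ∈ S | x ∈ e t} := by
  have map_subtype : ∀ t, ∀ e ∈ M t,
      (e.subtype (· ∈ U)).map (Function.Embedding.subtype _) = e :=
    fun t e he => subtype_map_of_mem fun x hx => hMU t e he hx
  have card_image : ∀ t, #((M t).image (Finset.subtype (· ∈ U))) = #(M t) := fun t =>
    card_image_of_injOn fun e he e' he' h => by
      rw [← map_subtype t e he, ← map_subtype t e' he', h]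
  obtain ⟨S, hS, e, he, heven⟩ := hc₀ #U hU k U (Fintype.card_coe U)
    (fun t => (M t).image (Finset.subtype (· ∈ U)))
    (fun t e he => by
      obtain ⟨d, hd, rfl⟩ := mem_image.1 he
      rw [← card_map (Function.Embedding.subtype _), map_subtype t d hd, hM2 t d hd])
    (fun t e he e' he' hne => by
      obtain ⟨d, hd, rfl⟩ := mem_image.1 he
      obtain ⟨d', hd', rfl⟩ := mem_image.1 he'
      rw [← disjoint_map (Function.Embedding.subtype _), map_subtype t d hd,
        map_subtype t d' hd']
      exact hMdisj t hd hd' (ne_of_apply_ne _ hne))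
    (by simpa only [card_image] using hM)
  refine ⟨S, hS, fun t => (e t).map (Function.Embedding.subtype _), fun t ht => ?_, fun x => ?_⟩
  · obtain ⟨d, hd, hde⟩ := mem_image.1 (he t ht)
    simpa only [← hde, map_subtype t d hd] using hd
  · by_cases hx : x ∈ U
    · simpa [hx] using heven ⟨x, hx⟩
    · simp [hx]

lemma le_sum_card_of_mul_le_card {X : Type*} {r n k : ℕ} {c₀ δ : ℝ} (hr : 3 ≤ r)
    (hc₀ : 0 ≤ c₀) (hδ : 0 < δ) (hn : 0 < n) {H : Fin k → Finset X}
    (hcard : ∀ i, δ * n ≤ #(H i))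
    (hk : 2 ^ (r ^ 2 + 1) * c₀ * δ⁻¹ * (n : ℝ) ^ (1 - 2 / (r : ℝ)) * Real.logb 2 n ^ 2 ≤ k) :
    8 ^ r * c₀ * (n : ℝ) ^ (2 - 2 / (r : ℝ)) * Real.logb 2 n ^ 2 ≤
      ((∑ i, #(H i) : ℕ) : ℝ) := by
  have eight_pow_le : (8 : ℝ) ^ r ≤ 2 ^ (r ^ 2 + 1) := by
    rw [show (8 : ℝ) = 2 ^ 3 by norm_num, ← pow_mul]
    exact pow_le_pow_right₀ one_le_two (by nlinarith)
  calc 8 ^ r * c₀ * (n : ℝ) ^ (2 - 2 / (r : ℝ)) * Real.logb 2 n ^ 2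
      ≤ 2 ^ (r ^ 2 + 1) * c₀ * (n * (n : ℝ) ^ (1 - 2 / (r : ℝ))) * Real.logb 2 n ^ 2 := by
        rw [rpow_two_sub (by exact_mod_cast hn)]; gcongr
    _ = 2 ^ (r ^ 2 + 1) * c₀ * δ⁻¹ * (n : ℝ) ^ (1 - 2 / (r : ℝ)) * Real.logb 2 n ^ 2 *
          (δ * n) := by field_simp
    _ ≤ k * (δ * n) := by gcongr
    _ = ∑ _i : Fin k, δ * n := by simp
    _ ≤ ((∑ i, #(H i) : ℕ) : ℝ) := by push_cast; exact sum_le_sum fun i _ => hcard i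

theorem stmt5_general {r : ℕ} (hreven : Even r) (hr4 : 4 ≤ r) {c₀ : ℝ} (hc₀ : 0 < c₀)
    (hconst : IsRainbowCycleConst c₀) {n : ℕ} (hn : (32 * r) ^ 2 ≤ n) {k : ℕ}
    (H : Fin k → Finset (Finset (Fin n))) (hcard : ∀ i, ∀ e ∈ H i, #e = r)
    (hdisj : ∀ i, (H i : Set (Finset (Fin n))).PairwiseDisjoint id)
    (hsize : 8 ^ r * c₀ * (n : ℝ) ^ (2 - 2 / (r : ℝ)) * Real.logb 2 n ^ 2 ≤
      ((∑ i, #(H i) : ℕ) : ℝ)) :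
    HasRainbowEvenCover H := by
  obtain ⟨s, rfl⟩ := hreven.two_dvd
  have hs : 2 ≤ s := by omega
  obtain ⟨l, hsl, hln, hsparse, hdense⟩ := exists_kikuchi_level hs (n := n) (by linarith)
  have matching := fun i => exists_kikuchi_matching (l := l) hs (by omega) (hcard i) (hdisj i)
    (by simpa only [Fintype.card_fin] using hsparse)
  simp only [Fintype.card_fin] at matching
  choose M hME hMdisj hM using matching
  have empty_notMem : ∀ i, ∅ ∉ H i := fun i h => by simpa [show s ≠ 0 by omega] using hcard i ∅ h
  have card_vertices : #(powersetCard l (univ : Finset (Fin n))) = n.choose l := by simp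
  have three_le : 3 ≤ #(powersetCard l (univ : Finset (Fin n))) := by
    have := succ_le_choose hln
    omega
  have size : c₀ * n.choose l * Real.logb 2 (n.choose l) *
      Real.logb 2 (Real.logb 2 (n.choose l)) ≤ ((∑ i, #(M i) : ℕ) : ℝ) :=
    calc _ ≤ c₀ * Real.logb 2 n ^ 2 *
            (64 ^ s * (n : ℝ) ^ (2 - 2 / ((2 * s : ℕ) : ℝ)) * (n - 2 * s).choose (l - s)) :=
          mul_choose_mul_logb_le hc₀.le hdense
      _ = 8 ^ (2 * s) * c₀ * (n : ℝ) ^ (2 - 2 / ((2 * s : ℕ) : ℝ)) * Real.logb 2 n ^ 2 *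
            (n - 2 * s).choose (l - s) := by rw [pow_mul]; norm_num; ring
      _ ≤ ((∑ i, #(H i) : ℕ) : ℝ) * (n - 2 * s).choose (l - s) := by gcongr
      _ ≤ ((∑ i, #(M i) : ℕ) : ℝ) := by
          rw [← Nat.cast_mul, sum_mul]
          exact_mod_cast sum_le_sum fun i _ => hM i
  obtain ⟨S, hS, e, he, heven⟩ := hconst.exists_rainbow_cycle three_le
    (fun i e he => subset_powersetCard_of_mem_kikuchiEdges (hME i he))
    (fun i e he => card_eq_two_of_mem_kikuchiEdges (empty_notMem i) (hME i he)) hMdisj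
    (by rwa [card_vertices])
  exact hasRainbowEvenCover_of_kikuchiEdges empty_notMem hS (fun t ht => hME t (he t ht)) heven

/-- For every even `r ≥ 4` there is a threshold `N₀` (depending only on `r`)
such that for every rainbow-cycle constant `c₀ > 0`, all `n ≥ N₀`, all
`δ ∈ (0,1)`, and every family of `k ≥ 2^{r²+1}·c₀·δ⁻¹·n^{1-2/r}·(log₂ n)²`
many `r`-uniform matchings over `[n]`, each of size at least `δ·n`, there is
a rainbow even cover. -/
theorem stmt5 (r : ℕ) (hreven : Even r) (hr4 : 4 ≤ r) :
    ∃ N₀ : ℕ, ∀ (c₀ : ℝ), 0 < c₀ → IsRainbowCycleConst c₀ →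
      ∀ n : ℕ, N₀ ≤ n → ∀ δ : ℝ, 0 < δ → δ < 1 →
        ∀ (k : ℕ) (H : Fin k → Finset (Finset (Fin n))),
          (∀ i, ∀ e ∈ H i, e.card = r) →
          (∀ i, ∀ e ∈ H i, ∀ e' ∈ H i, e ≠ e' → Disjoint e e') →
          (∀ i, δ * n ≤ ((H i).card : ℝ)) →
          (2 : ℝ) ^ (r ^ 2 + 1) * c₀ * δ⁻¹ * (n : ℝ) ^ ((1 : ℝ) - 2 / (r : ℝ)) *
              (Real.logb 2 n) ^ 2 ≤ (k : ℝ) →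
          HasRainbowEvenCover H :=
  ⟨(32 * r) ^ 2, fun c₀ hc₀ hconst n hn δ hδ _ k H hu hd hcard hk =>
    stmt5_general hreven hr4 hc₀ hconst hn H hu (fun i e he e' he' => hd i e he e' he')
      (le_sum_card_of_mul_le_card (by omega) hc₀.le hδ (by nlinarith) hcard hk)⟩
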